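/- Let X be a KU-algebra and d a derivation of X. If μ and β are fuzzy left derivations KU-ideals of X with respect to d, then the Cartesian product μ × β, defined by (μ × β)(x, y) = min(μ(x), β(y)), is a fuzzy left derivations KU-ideal of the product KU-algebra X × X with respect to the self map D(x, y) = (d(x), d(y)). -/

import Mathlib

/-- A KU-algebra: a set `X` with a binary operation `⋆` and a constant `𝟎` satisfying
(KU1) `(x⋆y)⋆((y⋆z)⋆(x⋆z)) = 𝟎`, (KU2) `x⋆𝟎 = 𝟎`, (KU3) `𝟎⋆x = x`,
(KU4) `x⋆y = 𝟎` and `y⋆x = 𝟎` imply `x = y`. -/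
class KUAlgebra (X : Type*) where
  star : X → X → X
  zero : X
  ku1 : ∀ x y z : X, star (star x y) (star (star y z) (star x z)) = zero
  ku2 : ∀ x : X, star x zero = zero
  ku3 : ∀ x : X, star zero x = x
  ku4 : ∀ x y : X, star x y = zero → star y x = zero → x = y

infixl:70 " ⋆ " => KUAlgebra.star
notation "𝟎" => KUAlgebra.zero

/-- The order `x ≤ y ↔ y ⋆ x = 𝟎` on a KU-algebra. -/
def KUle {X : Type*} [KUAlgebra X] (x y : X) : Prop := y ⋆ x = 𝟎

/-- `x ∧ y := (x ⋆ y) ⋆ y` in a KU-algebra. -/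
def KUwedge {X : Type*} [KUAlgebra X] (x y : X) : X := (x ⋆ y) ⋆ y

/-- An (ℓ,r)-derivation: `d(x⋆y) = (d(x)⋆y) ∧ (x⋆d(y))`. -/
def IsLRDeriv {X : Type*} [KUAlgebra X] (d : X → X) : Prop :=
  ∀ x y : X, d (x ⋆ y) = KUwedge (d x ⋆ y) (x ⋆ d y)

/-- An (r,ℓ)-derivation: `d(x⋆y) = (x⋆d(y)) ∧ (d(x)⋆y)`. -/
def IsRLDeriv {X : Type*} [KUAlgebra X] (d : X → X) : Prop :=
  ∀ x y : X, d (x ⋆ y) = KUwedge (x ⋆ d y) (d x ⋆ y)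

/-- A derivation is both an (ℓ,r)- and an (r,ℓ)-derivation. -/
def IsDeriv {X : Type*} [KUAlgebra X] (d : X → X) : Prop := IsLRDeriv d ∧ IsRLDeriv d

/-- A fuzzy left derivations KU-ideal of `X` with respect to a self map `d`:
a fuzzy set `μ : X → [0,1]` with `μ 𝟎 ≥ μ x` and
`μ (d (x ⋆ z)) ≥ min (μ (d x ⋆ (y ⋆ z))) (μ (d y))`. -/
def IsFuzzyLeftDerivKUIdeal {X : Type*} [KUAlgebra X] (d : X → X) (μ : X → ℝ) : Prop :=
  (∀ x : X, μ x ∈ Set.Icc (0 : ℝ) 1) ∧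
  (∀ x : X, μ 𝟎 ≥ μ x) ∧
  (∀ x y z : X, μ (d (x ⋆ z)) ≥ min (μ (d x ⋆ (y ⋆ z))) (μ (d y)))

/-- A fuzzy right derivations KU-ideal of `X` with respect to a self map `d`:
a fuzzy set `μ : X → [0,1]` with `μ 𝟎 ≥ μ x` and
`μ (d (x ⋆ z)) ≥ min (μ (x ⋆ d (y ⋆ z))) (μ (d y))`. -/
def IsFuzzyRightDerivKUIdeal {X : Type*} [KUAlgebra X] (d : X → X) (μ : X → ℝ) : Prop :=
  (∀ x : X, μ x ∈ Set.Icc (0 : ℝ) 1) ∧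
  (∀ x : X, μ 𝟎 ≥ μ x) ∧
  (∀ x y z : X, μ (d (x ⋆ z)) ≥ min (μ (x ⋆ d (y ⋆ z))) (μ (d y)))

/-- The product of two KU-algebras, with componentwise operation and constant `(𝟎, 𝟎)`. -/
instance instKUProd {X Y : Type*} [KUAlgebra X] [KUAlgebra Y] : KUAlgebra (X × Y) where
  star p q := (p.1 ⋆ q.1, p.2 ⋆ q.2)
  zero := (𝟎, 𝟎)
  ku1 p q r := by
    simp only [Prod.mk.injEq]
    exact ⟨KUAlgebra.ku1 _ _ _, KUAlgebra.ku1 _ _ _⟩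
  ku2 p := by
    simp only [Prod.mk.injEq]
    exact ⟨KUAlgebra.ku2 _, KUAlgebra.ku2 _⟩
  ku3 p := Prod.ext (KUAlgebra.ku3 _) (KUAlgebra.ku3 _)
  ku4 p q h1 h2 := by
    rw [Prod.ext_iff] at h1 h2
    exact Prod.ext (KUAlgebra.ku4 _ _ h1.1 h2.1) (KUAlgebra.ku4 _ _ h1.2 h2.2)

/-- The Cartesian product `(μ × β)(x,y) = min (μ x) (β y)` of two fuzzy left derivations
KU-ideals with respect to a derivation `d` is a fuzzy left derivations KU-ideal of the
product KU-algebra `X × X` with respect to `D(x,y) = (d x, d y)`. -/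
theorem product_fuzzy_left_deriv_ideal {X : Type*} [KUAlgebra X]
    (d : X → X) (hd : IsDeriv d) (μ β : X → ℝ)
    (hμ : IsFuzzyLeftDerivKUIdeal d μ) (hβ : IsFuzzyLeftDerivKUIdeal d β) :
    IsFuzzyLeftDerivKUIdeal (X := X × X) (fun p => (d p.1, d p.2))
      (fun p => min (μ p.1) (β p.2)) := by
  refine ⟨fun p => ?_, fun p => ?_, fun p q r => ?_⟩
  · exact ⟨le_min (hμ.1 p.1).1 (hβ.1 p.2).1, (min_le_left _ _).trans (hμ.1 p.1).2⟩
  · exact min_le_min (hμ.2.1 p.1) (hβ.2.1 p.2)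
  -- Regroup `min (min a b) (min c e)` as `min (min a c) (min b e)`: the inequality then splits
  -- into the two coordinate inequalities.
  · exact (min_min_min_comm _ _ _ _).le.trans
      (min_le_min (hμ.2.2 p.1 q.1 r.1) (hβ.2.2 p.2 q.2 r.2))
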